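/- Let Xᵢ, X_{−i}, Rᵢ, R_{−i}, M, Z, Π be discrete random variables with finite range on a common probability space, and write X = (Xᵢ, X_{−i}) and R = (Rᵢ, R_{−i}). Assume: (a) H(Π | X, R) = 0 (Π is determined by X and R); (b) I(M; R_{−i} | X, Rᵢ, Z) = 0; and (c) I(Π; Z | X, Rᵢ) = 0. Then I(M; Π | Xᵢ, Rᵢ, Z) ≤ I(X_{−i}; Π | Xᵢ, Rᵢ). -/

import Mathlib

open Finset

noncomputable section

open Classical in
/-- Probability of an event under a probability mass function on a finite sample space. -/
def pr {Ω : Type*} [Fintype Ω] (p : Ω → ℝ) (E : Ω → Prop) : ℝ :=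
  ∑ ω ∈ Finset.univ.filter E, p ω

open Classical in
/-- Shannon entropy (in bits) of a discrete random variable on a finite sample space. -/
def entropy {Ω A : Type*} [Fintype Ω] (p : Ω → ℝ) (X : Ω → A) : ℝ :=
  -∑ a ∈ Finset.univ.image X,
    pr p (fun ω => X ω = a) * Real.logb 2 (pr p (fun ω => X ω = a))

open Classical in
/-- Conditional entropy `H(X | Y) = ∑_y Pr[Y=y] · H(X | Y=y)` (in bits). -/
def condEntropy {Ω A B : Type*} [Fintype Ω] (p : Ω → ℝ) (X : Ω → A) (Y : Ω → B) : ℝ :=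
  ∑ b ∈ Finset.univ.image Y,
    pr p (fun ω => Y ω = b) *
      (-∑ a ∈ Finset.univ.image X,
        (pr p (fun ω => X ω = a ∧ Y ω = b) / pr p (fun ω => Y ω = b)) *
          Real.logb 2
            (pr p (fun ω => X ω = a ∧ Y ω = b) / pr p (fun ω => Y ω = b)))

/-- Conditional mutual information `I(X;Y | Z) = H(X|Z) − H(X|Y,Z)` (in bits). -/
def condMutualInfo {Ω A B C : Type*} [Fintype Ω] (p : Ω → ℝ)
    (X : Ω → A) (Y : Ω → B) (Z : Ω → C) : ℝ :=
  condEntropy p X Z - condEntropy p X (fun ω => (Y ω, Z ω))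

open Classical in
def hh {Ω A : Type*} [Fintype Ω] (p : Ω → ℝ) (V : Ω → A) : ℝ :=
  -∑ ω, p ω * Real.logb 2 (pr p (fun ω' => V ω' = V ω))

lemma pr_nonneg' {Ω : Type*} [Fintype Ω] (p : Ω → ℝ) (hp : ∀ ω, 0 ≤ p ω) (E : Ω → Prop) :
    0 ≤ pr p E := Finset.sum_nonneg (fun _ _ => hp _)

lemma pr_mono' {Ω : Type*} [Fintype Ω] (p : Ω → ℝ) (hp : ∀ ω, 0 ≤ p ω) (E F : Ω → Prop)
    (h : ∀ ω, E ω → F ω) : pr p E ≤ pr p F := by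
  classical
  unfold pr
  apply Finset.sum_le_sum_of_subset_of_nonneg
  · intro ω
    simp only [Finset.mem_filter, Finset.mem_univ, true_and]
    exact h ω
  · intros
    exact hp _

lemma le_pr' {Ω : Type*} [Fintype Ω] (p : Ω → ℝ) (hp : ∀ ω, 0 ≤ p ω) (E : Ω → Prop)
    (ω : Ω) (h : E ω) : p ω ≤ pr p E := by
  classical
  unfold pr
  exact Finset.single_le_sum (f := p) (fun _ _ => hp _) (by simpa using h)

open Classical in
lemma pr_eq_ite {Ω : Type*} [Fintype Ω] (p : Ω → ℝ) (E : Ω → Prop) :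
    pr p E = ∑ ω, if E ω then p ω else 0 := by
  unfold pr
  rw [Finset.sum_filter]

lemma hh_mono {Ω A B : Type*} [Fintype Ω] (p : Ω → ℝ) (hp : ∀ ω, 0 ≤ p ω)
    (X : Ω → A) (Y : Ω → B) : hh p Y ≤ hh p (fun ω => (X ω, Y ω)) := by
  unfold hh
  apply neg_le_neg
  apply Finset.sum_le_sum
  intro ω _
  rcases (hp ω).eq_or_lt with h | h
  · simp [← h]
  · apply mul_le_mul_of_nonneg_left _ (hp ω)
    apply Real.logb_le_logb_of_le (by norm_num)
    · exact h.trans_le (le_pr' p hp _ ω rfl)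
    · apply pr_mono' p hp
      intro ω' h'
      exact (Prod.mk.inj h').2

open Classical in
lemma fiber_le {Ω A : Type*} [Fintype Ω] (p : Ω → ℝ)
    (V : Ω → A) (v : A) :
    ∑ ω, (if V ω = v then p ω / pr p (fun ω' => V ω' = V ω) else 0) ≤ 1 := by
  have : ∑ ω, (if V ω = v then p ω / pr p (fun ω' => V ω' = V ω) else 0)
      = pr p (fun ω' => V ω' = v) / pr p (fun ω' => V ω' = v) := by
    conv_rhs => rw [pr_eq_ite, Finset.sum_div]
    apply Finset.sum_congr rfl
    intro ω _
    split_ifs with h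
    · rw [h, ← pr_eq_ite]
    · simp
  rw [this]
  exact div_self_le_one _

lemma key_sum {Ω A B C : Type*} [Fintype Ω] (p : Ω → ℝ) (hp : ∀ ω, 0 ≤ p ω)
    (X : Ω → A) (Y : Ω → B) (Z : Ω → C) :
    ∑ ω, p ω * (pr p (fun ω' => (X ω', Z ω') = (X ω, Z ω)) *
      pr p (fun ω' => (Y ω', Z ω') = (Y ω, Z ω)) /
      (pr p (fun ω' => (X ω', Y ω', Z ω') = (X ω, Y ω, Z ω)) * pr p (fun ω' => Z ω' = Z ω)))
      ≤ ∑ ω, p ω := by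
  classical
  have e : ∀ ω, p ω * (pr p (fun ω' => (X ω', Z ω') = (X ω, Z ω)) *
      pr p (fun ω' => (Y ω', Z ω') = (Y ω, Z ω)) /
      (pr p (fun ω' => (X ω', Y ω', Z ω') = (X ω, Y ω, Z ω)) * pr p (fun ω' => Z ω' = Z ω)))
      = ∑ ω1, ∑ ω2, (if Z ω2 = Z ω1 then p ω1 * p ω2 / pr p (fun ω' => Z ω' = Z ω1) else 0) *
        (if (X ω, Y ω, Z ω) = (X ω1, Y ω2, Z ω1) then
          p ω / pr p (fun ω' => (X ω', Y ω', Z ω') = (X ω, Y ω, Z ω)) else 0) := by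
    intro ω
    have : ∀ P Q S T : ℝ, p ω * (P * Q / (S * T)) = (P * Q) * (p ω / S / T) := by
      intros
      field_simp
    rw [this, pr_eq_ite p (fun ω' => (X ω', Z ω') = (X ω, Z ω)),
      pr_eq_ite p (fun ω' => (Y ω', Z ω') = (Y ω, Z ω)), Finset.sum_mul_sum, Finset.sum_mul]
    apply Finset.sum_congr rfl
    intro ω1 _
    rw [Finset.sum_mul]
    apply Finset.sum_congr rfl
    intro ω2 _
    by_cases hall : X ω = X ω1 ∧ Y ω = Y ω2 ∧ Z ω = Z ω1 ∧ Z ω = Z ω2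
    · obtain ⟨h1, h2, h3, h4⟩ := hall
      have h5 : Z ω2 = Z ω1 := h4.symm.trans h3
      simp only [h1, h2, h3, h5, if_true]
      ring
    · simp only [Prod.mk.injEq]
      split_ifs <;> first | (exfalso; grind) | simp
  simp_rw [e]
  rw [Finset.sum_comm]
  apply Finset.sum_le_sum
  intro ω1 _
  rw [Finset.sum_comm]
  simp_rw [← Finset.mul_sum]
  calc _ ≤ ∑ ω2, (if Z ω2 = Z ω1 then p ω1 * p ω2 / pr p (fun ω' => Z ω' = Z ω1) else 0) := by
        apply Finset.sum_le_sum
        intro ω2 _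
        apply mul_le_of_le_one_right
        · split_ifs
          · exact div_nonneg (mul_nonneg (hp _) (hp _)) (pr_nonneg' p hp _)
          · exact le_rfl
        · refine le_trans (le_of_eq ?_) (fiber_le p (fun ω => (X ω, Y ω, Z ω)) (X ω1, Y ω2, Z ω1))
          apply Finset.sum_congr rfl
          intro ω _
          congr
    _ = p ω1 * (pr p (fun ω' => Z ω' = Z ω1) / pr p (fun ω' => Z ω' = Z ω1)) := by
        conv_rhs => rw [pr_eq_ite, Finset.sum_div, Finset.mul_sum]
        apply Finset.sum_congr rfl
        intro ω2 _
        rw [← pr_eq_ite]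
        split_ifs
        · ring
        · simp
    _ ≤ p ω1 := mul_le_of_le_one_right (hp _) (div_self_le_one _)

lemma hh_submod {Ω A B C : Type*} [Fintype Ω] (p : Ω → ℝ) (hp : ∀ ω, 0 ≤ p ω)
    (X : Ω → A) (Y : Ω → B) (Z : Ω → C) :
    hh p (fun ω => (X ω, Y ω, Z ω)) + hh p Z ≤
      hh p (fun ω => (X ω, Z ω)) + hh p (fun ω => (Y ω, Z ω)) := by
  have hk := key_sum p hp X Y Z
  have hl : (0:ℝ) < Real.log 2 := Real.log_pos (by norm_num)
  have main : ∑ ω, p ω * (Real.log (pr p (fun ω' => (X ω', Z ω') = (X ω, Z ω))) +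
      Real.log (pr p (fun ω' => (Y ω', Z ω') = (Y ω, Z ω))) -
      Real.log (pr p (fun ω' => (X ω', Y ω', Z ω') = (X ω, Y ω, Z ω))) -
      Real.log (pr p (fun ω' => Z ω' = Z ω))) ≤ 0 := by
    have : ∀ a b : ℝ, a ≤ b → a - b ≤ 0 := fun a b h => by linarith
    refine le_trans ?_ (this _ _ hk)
    rw [← Finset.sum_sub_distrib]
    apply Finset.sum_le_sum
    intro ω _
    rcases (hp ω).eq_or_lt with h | h
    · simp [← h]
    · have h1 := h.trans_le (le_pr' p hp (fun ω' => (X ω', Z ω') = (X ω, Z ω)) ω rfl)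
      have h2 := h.trans_le (le_pr' p hp (fun ω' => (Y ω', Z ω') = (Y ω, Z ω)) ω rfl)
      have h3 := h.trans_le (le_pr' p hp
        (fun ω' => (X ω', Y ω', Z ω') = (X ω, Y ω, Z ω)) ω rfl)
      have h4 := h.trans_le (le_pr' p hp (fun ω' => Z ω' = Z ω) ω rfl)
      have h5 := Real.log_le_sub_one_of_pos (div_pos (mul_pos h1 h2) (mul_pos h3 h4))
      rw [Real.log_div (mul_pos h1 h2).ne' (mul_pos h3 h4).ne', Real.log_mul h1.ne' h2.ne',
        Real.log_mul h3.ne' h4.ne'] at h5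
      have h6 := mul_le_mul_of_nonneg_left h5 h.le
      linarith
  have e : ∀ {D : Type _} (V : Ω → D), hh p V =
      -(∑ ω, p ω * Real.log (pr p (fun ω' => V ω' = V ω))) / Real.log 2 := by
    intro D V
    unfold hh Real.logb
    rw [neg_div, Finset.sum_div]
    simp_rw [mul_div_assoc]
  have e' : hh p Z =
      -(∑ ω, p ω * Real.log (pr p (fun ω' => Z ω' = Z ω))) / Real.log 2 := by
    unfold hh Real.logb
    rw [neg_div, Finset.sum_div]
    simp_rw [mul_div_assoc]
  have e1 : hh p (fun ω => (X ω, Z ω)) =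
      -(∑ ω, p ω * Real.log (pr p (fun ω' => (X ω', Z ω') = (X ω, Z ω)))) / Real.log 2 := by
    unfold hh Real.logb
    rw [neg_div, Finset.sum_div]
    simp_rw [mul_div_assoc]
  have e2 : hh p (fun ω => (Y ω, Z ω)) =
      -(∑ ω, p ω * Real.log (pr p (fun ω' => (Y ω', Z ω') = (Y ω, Z ω)))) / Real.log 2 := by
    unfold hh Real.logb
    rw [neg_div, Finset.sum_div]
    simp_rw [mul_div_assoc]
  rw [e (fun ω => (X ω, Y ω, Z ω)), e', e1, e2, ← add_div, ← add_div]
  apply div_le_div_of_nonneg_right _ hl.le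
  simp only [mul_sub, mul_add, Finset.sum_sub_distrib, Finset.sum_add_distrib] at main
  linarith

open Classical in
lemma sum_fib {Ω A B : Type*} [Fintype Ω] (p : Ω → ℝ) (X : Ω → A) (Y : Ω → B)
    (F : A → B → ℝ) :
    ∑ ω, p ω * F (X ω) (Y ω) = ∑ b ∈ Finset.univ.image Y, ∑ a ∈ Finset.univ.image X,
      pr p (fun ω => X ω = a ∧ Y ω = b) * F a b := by
  rw [← Finset.sum_fiberwise_of_maps_to (t := Finset.univ.image Y) (g := Y)
    (fun ω _ => Finset.mem_image_of_mem _ (Finset.mem_univ ω))]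
  apply Finset.sum_congr rfl
  intro b _
  rw [← Finset.sum_fiberwise_of_maps_to (t := Finset.univ.image X) (g := X)
    (fun ω _ => Finset.mem_image_of_mem _ (Finset.mem_univ ω))]
  apply Finset.sum_congr rfl
  intro a _
  unfold pr
  rw [Finset.filter_filter, Finset.sum_mul]
  apply Finset.sum_congr
  · ext ω
    simp [and_comm]
  · intro ω h
    simp only [Finset.mem_filter, Finset.mem_univ, true_and] at h
    rw [h.1, h.2]

lemma condEntropy_eq {Ω A B : Type*} [Fintype Ω] (p : Ω → ℝ) (hp : ∀ ω, 0 ≤ p ω)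
    (X : Ω → A) (Y : Ω → B) :
    condEntropy p X Y = hh p (fun ω => (X ω, Y ω)) - hh p Y := by
  classical
  have h1 : condEntropy p X Y = -∑ ω, p ω * Real.logb 2
      (pr p (fun ω' => X ω' = X ω ∧ Y ω' = Y ω) / pr p (fun ω' => Y ω' = Y ω)) := by
    rw [sum_fib p X Y (fun a b => Real.logb 2
      (pr p (fun ω' => X ω' = a ∧ Y ω' = b) / pr p (fun ω' => Y ω' = b)))]
    unfold condEntropy
    rw [← Finset.sum_neg_distrib]
    apply Finset.sum_congr rfl
    intro b _
    rw [mul_neg, Finset.mul_sum]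
    congr 1
    apply Finset.sum_congr rfl
    intro a _
    rw [← mul_assoc]
    congr 1
    have hle := pr_mono' p hp (fun ω' => X ω' = a ∧ Y ω' = b) (fun ω' => Y ω' = b)
      (fun _ h => h.2)
    have h0 := pr_nonneg' p hp (fun ω' => X ω' = a ∧ Y ω' = b)
    by_cases hb : pr p (fun ω' => Y ω' = b) = 0
    · rw [hb] at hle ⊢
      linarith
    · exact mul_div_cancel₀ _ hb
  rw [h1]
  unfold hh
  rw [sub_neg_eq_add, neg_add_eq_sub, ← neg_sub, ← Finset.sum_sub_distrib]
  congr 1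
  apply Finset.sum_congr rfl
  intro ω _
  simp only [Prod.mk.injEq]
  rcases (hp ω).eq_or_lt with h | h
  · simp [← h]
  · have h2 := h.trans_le (le_pr' p hp (fun ω' => X ω' = X ω ∧ Y ω' = Y ω) ω ⟨rfl, rfl⟩)
    have h4 := h.trans_le (le_pr' p hp (fun ω' => Y ω' = Y ω) ω rfl)
    rw [Real.logb_div h2.ne' h4.ne']
    ring

/-- First half of `SMIC ≤ MIC`: if the transcript `Tr` is determined by the inputs
`X = (Xᵢ, X₋ᵢ)` and the randomness `R = (Rᵢ, R₋ᵢ)`, `I(M; R₋ᵢ | X Rᵢ Z) = 0`, and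
`I(Tr; Z | X Rᵢ) = 0`, then `I(M; Tr | Xᵢ Rᵢ Z) ≤ I(X₋ᵢ; Tr | Xᵢ Rᵢ)`. -/
theorem smic_le_mic_first_half {Ω α α' β β' γ δ ε' : Type*} [Fintype Ω]
    (p : Ω → ℝ) (hp : ∀ ω, 0 ≤ p ω) (hsum : ∑ ω, p ω = 1)
    (Xi : Ω → α) (Xmi : Ω → α') (Ri : Ω → β) (Rmi : Ω → β')
    (M : Ω → γ) (Z : Ω → δ) (Tr : Ω → ε')
    (ha : condEntropy p Tr (fun ω => ((Xi ω, Xmi ω), (Ri ω, Rmi ω))) = 0)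
    (hb : condMutualInfo p M Rmi (fun ω => ((Xi ω, Xmi ω), Ri ω, Z ω)) = 0)
    (hc : condMutualInfo p Tr Z (fun ω => ((Xi ω, Xmi ω), Ri ω)) = 0) :
    condMutualInfo p M Tr (fun ω => (Xi ω, Ri ω, Z ω)) ≤
      condMutualInfo p Xmi Tr (fun ω => (Xi ω, Ri ω)) := by
  have f1 := hh_submod p hp Xmi Tr (fun ω => (M ω, Xi ω, Ri ω, Z ω))
  have f2 := hh_submod p hp Tr Z (fun ω => (Xi ω, Xmi ω, Ri ω, Rmi ω))
  have f3 := hh_submod p hp M Rmi (fun ω => (Tr ω, Xi ω, Xmi ω, Ri ω, Z ω))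
  have f4 := hh_mono p hp Tr (fun ω => (M ω, Rmi ω, Xi ω, Xmi ω, Ri ω, Z ω))
  have f5 := hh_submod p hp Tr Z (fun ω => (Xi ω, Ri ω))
  simp only [condMutualInfo, condEntropy_eq p hp] at ha hb hc ⊢
  simp only [hh, Prod.mk.injEq, and_assoc, and_comm, and_left_comm] at ha hb hc f1 f2 f3 f4 f5 ⊢
  linarith
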